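/- arXiv:1708.04579 — 4 statements merged into one kernel-verified Lean document; each statement's English description precedes it below -/
import Mathlib

section
/- Every discrete midpoint convex set S ⊆ ℤⁿ is integrally convex; that is, every point x of the convex hull of S (in ℝⁿ) lies in the convex hull of S ∩ N(x). -/
/-!
Among the representations of `x` as a convex combination of finitely many points of `S`, choose
one minimizing the weighted sum of the squared Euclidean norms. If it used two points at
`ℓ∞`-distance at least `2`, moving a little weight from both of them to their rounded midpoints
would preserve `x` and, by the parallelogram identity, decrease the objective. So the points used
are pairwise within distance `1`, and averaging the differences to one of them, which include `0`,
puts `x` at distance less than `1` from each. Confining the points to a box, which discrete midpoint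
convexity survives, makes the set of weights compact, so that a minimizer exists.
-/

/-- The ℓ∞-norm of an integer vector, as a natural number. -/
def linf {n : ℕ} (z : Fin n → ℤ) : ℕ :=
  Finset.univ.sup fun i => (z i).natAbs

/-- Componentwise round-up of (x+y)/2. -/
def avgUp {n : ℕ} (x y : Fin n → ℤ) : Fin n → ℤ :=
  fun i => ⌈((x i + y i : ℚ)) / 2⌉

/-- Componentwise round-down of (x+y)/2. -/
def avgDown {n : ℕ} (x y : Fin n → ℤ) : Fin n → ℤ :=
  fun i => ⌊((x i + y i : ℚ)) / 2⌋

/-- A set `S ⊆ ℤⁿ` is discrete midpoint convex. -/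
def DMCSet {n : ℕ} (S : Set (Fin n → ℤ)) : Prop :=
  ∀ ⦃x⦄, x ∈ S → ∀ ⦃y⦄, y ∈ S → 2 ≤ linf (x - y) →
    avgUp x y ∈ S ∧ avgDown x y ∈ S

/-- The integral neighborhood of a real point. -/
def intNbhd {n : ℕ} (x : Fin n → ℝ) : Set (Fin n → ℤ) :=
  {z | ∀ i, |x i - (z i : ℝ)| < 1}

section Exchange

variable {R ι : Type*} [Ring R] [DecidableEq ι]

/-- The weights obtained from `w` by moving an amount `ε` of weight from each of `i` and `j` to
`k` and `l`, respectively. The indices are allowed to coincide. -/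
def exchangeWeights (w : ι → R) (i j k l : ι) (ε : R) : ι → R :=
  w - Pi.single i ε - Pi.single j ε + Pi.single k ε + Pi.single l ε

theorem linearCombination_exchangeWeights {M : Type*} [AddCommGroup M] [Module R M] [Fintype ι]
    (p : ι → M) (w : ι → R) (i j k l : ι) (ε : R) :
    Fintype.linearCombination R p (exchangeWeights w i j k l ε) =
      Fintype.linearCombination R p w + ε • (p k + p l - (p i + p j)) := by
  simp only [exchangeWeights, map_add, map_sub, Fintype.linearCombination_apply_single, smul_add,
    smul_sub]
  abel

theorem exchangeWeights_nonneg [PartialOrder R] [IsOrderedRing R] {w : ι → R} {i j : ι}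
    {ε : R} (hw : 0 ≤ w) (hε : 0 ≤ ε) (hi : 2 * ε ≤ w i) (hj : 2 * ε ≤ w j) (k l : ι) :
    0 ≤ exchangeWeights w i j k l ε := by
  rw [two_mul] at hi hj
  have hsub : 0 ≤ w - Pi.single i ε - Pi.single j ε := by
    intro t
    have ht : 0 ≤ w t := hw t
    simp only [Pi.zero_apply, Pi.sub_apply, Pi.single_apply, sub_sub, sub_nonneg]
    split_ifs with hti htj htj <;> subst_vars
    · exact hi
    · simpa using (le_add_of_nonneg_left hε).trans hi
    · simpa using (le_add_of_nonneg_left hε).trans hj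
    · simpa using ht
  exact add_nonneg (add_nonneg hsub (Pi.single_nonneg.2 hε)) (Pi.single_nonneg.2 hε)

end Exchange

section ConvexWeights

variable {𝕜 E ι : Type*} [Field 𝕜] [LinearOrder 𝕜] [AddCommGroup E] [Module 𝕜 E] [Fintype ι]

theorem convexHull_range_eq_image_stdSimplex [IsStrictOrderedRing 𝕜] (p : ι → E) :
    convexHull 𝕜 (Set.range p) = Fintype.linearCombination 𝕜 p '' stdSimplex 𝕜 ι := by
  classical
  rw [← convexHull_rangle_single_eq_stdSimplex, LinearMap.image_convexHull, ← Set.range_comp]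
  congr 2
  ext i
  simp

/-- The coefficient vectors of the representations of `x` as a convex combination of the
family `p`. -/
def convexWeights (p : ι → E) (x : E) : Set (ι → 𝕜) :=
  stdSimplex 𝕜 ι ∩ Fintype.linearCombination 𝕜 p ⁻¹' {x}

variable {p : ι → E} {x : E} {w : ι → 𝕜}

theorem convexWeights_nonempty_iff [IsStrictOrderedRing 𝕜] :
    (convexWeights (𝕜 := 𝕜) p x).Nonempty ↔ x ∈ convexHull 𝕜 (Set.range p) := by
  rw [convexHull_range_eq_image_stdSimplex]
  rfl

theorem mem_convexHull_image_pos [IsStrictOrderedRing 𝕜] (hw : w ∈ convexWeights p x) :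
    x ∈ convexHull 𝕜 (p '' {i | 0 < w i}) := by
  classical
  obtain ⟨⟨hw₀, hw₁⟩, rfl⟩ := hw
  have hpos {i : ι} : w i ≠ 0 ↔ 0 < w i := (hw₀ i).lt_iff_ne'.symm
  have hsum : ∑ i with w i ≠ 0, w i • p i = ∑ i, w i • p i :=
    Finset.sum_filter_of_ne fun i _ h h₀ => h (by rw [h₀, zero_smul])
  rw [Fintype.linearCombination_apply, ← hsum]
  refine (convex_convexHull 𝕜 _).sum_mem (fun i _ => hw₀ i) ?_ fun i hi => ?_
  · rw [Finset.sum_filter_ne_zero, hw₁]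
  · exact subset_convexHull 𝕜 _ ⟨i, hpos.1 (Finset.mem_filter.1 hi).2, rfl⟩

theorem isCompact_convexWeights {E : Type*} [AddCommGroup E] [Module ℝ E] [TopologicalSpace E]
    [IsTopologicalAddGroup E] [ContinuousSMul ℝ E] [T1Space E] (p : ι → E) (x : E) :
    IsCompact (convexWeights (𝕜 := ℝ) p x) :=
  (isCompact_stdSimplex ℝ ι).inter_right
    (isClosed_singleton.preimage (LinearMap.continuous_on_pi _))

theorem exists_isMinOn_convexWeights {E : Type*} [AddCommGroup E] [Module ℝ E]
    [TopologicalSpace E] [IsTopologicalAddGroup E] [ContinuousSMul ℝ E] [T1Space E]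
    {p : ι → E} {x : E} (hx : x ∈ convexHull ℝ (Set.range p)) (c : ι → ℝ) :
    ∃ w ∈ convexWeights p x, IsMinOn (Fintype.linearCombination ℝ c) (convexWeights p x) w :=
  (isCompact_convexWeights p x).exists_isMinOn (convexWeights_nonempty_iff.2 hx)
    (LinearMap.continuous_on_pi _).continuousOn

theorem exchangeWeights_mem_convexWeights [IsStrictOrderedRing 𝕜] [DecidableEq ι] {i j k l : ι}
    {ε : 𝕜} (hw : w ∈ convexWeights p x) (hε : 0 ≤ ε) (hi : 2 * ε ≤ w i) (hj : 2 * ε ≤ w j)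
    (h : p k + p l = p i + p j) :
    exchangeWeights w i j k l ε ∈ convexWeights p x := by
  obtain ⟨⟨hw₀, hw₁⟩, rfl⟩ := hw
  refine ⟨⟨exchangeWeights_nonneg hw₀ hε hi hj k l, ?_⟩, ?_⟩
  · simpa [Fintype.linearCombination_apply, hw₁] using
      linearCombination_exchangeWeights (fun _ => (1 : 𝕜)) w i j k l ε
  · simp [linearCombination_exchangeWeights, h]

theorem add_le_add_of_isMinOn_convexWeights [IsStrictOrderedRing 𝕜] {c : ι → 𝕜}
    (hw : w ∈ convexWeights p x)
    (hmin : IsMinOn (Fintype.linearCombination 𝕜 c) (convexWeights p x) w) {i j k l : ι}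
    (hi : 0 < w i) (hj : 0 < w j) (h : p k + p l = p i + p j) : c i + c j ≤ c k + c l := by
  classical
  -- Half of the minimum, since `i` and `j` may be equal.
  set ε := min (w i) (w j) / 2
  have hε₀ : 0 < ε := half_pos (lt_min hi hj)
  have h2ε : 2 * ε = min (w i) (w j) := mul_div_cancel₀ _ two_ne_zero
  have hle := isMinOn_iff.1 hmin _ <| exchangeWeights_mem_convexWeights hw hε₀.le
    (h2ε.trans_le (min_le_left _ _)) (h2ε.trans_le (min_le_right _ _)) h
  rw [linearCombination_exchangeWeights, le_add_iff_nonneg_right, smul_eq_mul] at hle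
  exact sub_nonneg.1 (nonneg_of_mul_nonneg_right hle hε₀)

theorem norm_sub_lt_of_mem_convexWeights {E : Type*} [SeminormedAddCommGroup E]
    [NormedSpace ℝ E] {p : ι → E} {x : E} {w : ι → ℝ} (hw : w ∈ convexWeights p x) {r : ℝ}
    (hr : 0 < r) {j : ι} (hj : 0 < w j) (h : ∀ i, 0 < w i → ‖p i - p j‖ ≤ r) :
    ‖x - p j‖ < r := by
  obtain ⟨⟨hw₀, hw₁⟩, rfl⟩ := hw
  calc ‖Fintype.linearCombination ℝ p w - p j‖ = ‖∑ i, w i • (p i - p j)‖ := by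
        simp [Fintype.linearCombination_apply, smul_sub, ← Finset.sum_smul, hw₁]
    _ ≤ ∑ i, w i * ‖p i - p j‖ := norm_sum_le_of_le _ fun i _ => by
        rw [norm_smul, Real.norm_of_nonneg (hw₀ i)]
    _ < ∑ i, w i * r := by
        refine Finset.sum_lt_sum (fun i _ => ?_) ⟨j, Finset.mem_univ j, by simp [hj, hr]⟩
        obtain hi | hi := (hw₀ i).eq_or_lt
        · simp [← hi]
        · exact mul_le_mul_of_nonneg_left (h i hi) hi.le
    _ = r := by rw [← Finset.sum_mul, hw₁, one_mul]

end ConvexWeights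

theorem exists_mem_convexHull_image_inter_Icc {𝕜 E α : Type*} [Field 𝕜] [LinearOrder 𝕜]
    [IsStrictOrderedRing 𝕜] [AddCommGroup E] [Module 𝕜 E] [Preorder α] [IsDirectedOrder α]
    [IsCodirectedOrder α] [Nonempty α] {f : α → E} {s : Set α} {x : E}
    (hx : x ∈ convexHull 𝕜 (f '' s)) :
    ∃ a b, x ∈ convexHull 𝕜 (f '' (s ∩ Set.Icc a b)) := by
  classical
  simp only [convexHull_eq_union_convexHull_finite_subsets (f '' s), Set.mem_iUnion] at hx
  obtain ⟨t, hts, hxt⟩ := hx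
  obtain ⟨u, hus, rfl⟩ := Finset.subset_set_image_iff.1 hts
  obtain ⟨a, ha⟩ := u.finite_toSet.bddBelow
  obtain ⟨b, hb⟩ := u.finite_toSet.bddAbove
  rw [Finset.coe_image] at hxt
  have hu : (u : Set α) ⊆ s ∩ Set.Icc a b := fun z hz => ⟨hus hz, ha hz, hb hz⟩
  exact ⟨a, b, convexHull_mono (Set.image_mono hu) hxt⟩

section Parallelogram

variable {R : Type*} [CommRing R] [LinearOrder R] [IsStrictOrderedRing R] {a b c d : R}

theorem sq_add_sq_le_iff_of_add_eq (h : a + b = c + d) :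
    a ^ 2 + b ^ 2 ≤ c ^ 2 + d ^ 2 ↔ |a - b| ≤ |c - d| := by
  have hab : 2 * (a ^ 2 + b ^ 2) = (c + d) ^ 2 + (a - b) ^ 2 := by rw [← h]; ring
  have hcd : 2 * (c ^ 2 + d ^ 2) = (c + d) ^ 2 + (c - d) ^ 2 := by ring
  rw [← mul_le_mul_iff_right₀ (zero_lt_two' R), hab, hcd, add_le_add_iff_left, sq_le_sq]

theorem sq_add_sq_lt_iff_of_add_eq (h : a + b = c + d) :
    a ^ 2 + b ^ 2 < c ^ 2 + d ^ 2 ↔ |a - b| < |c - d| := by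
  simpa only [not_le] using (sq_add_sq_le_iff_of_add_eq h.symm).not

end Parallelogram

section IntegerVectors

variable {n : ℕ}

theorem lt_linf_iff {z : Fin n → ℤ} {k : ℕ} : k < linf z ↔ ∃ i, k < (z i).natAbs := by
  simp [linf, Finset.lt_sup_iff]

theorem avgUp_apply (y z : Fin n → ℤ) (i : Fin n) : avgUp y z i = (y i + z i + 1) / 2 := by
  have h := Rat.ceil_intCast_div_natCast (y i + z i) 2
  push_cast at h
  rw [avgUp, h]
  omega

theorem avgDown_apply (y z : Fin n → ℤ) (i : Fin n) : avgDown y z i = (y i + z i) / 2 := by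
  simpa [avgDown] using Rat.floor_intCast_div_natCast (y i + z i) 2

theorem avgUp_add_avgDown (y z : Fin n → ℤ) : avgUp y z + avgDown y z = y + z := by
  ext i
  simp only [Pi.add_apply, avgUp_apply, avgDown_apply]
  omega

theorem abs_avgUp_sub_avgDown_le (y z : Fin n → ℤ) (i : Fin n) :
    |avgUp y z i - avgDown y z i| ≤ |y i - z i| := by
  simp only [avgUp_apply, avgDown_apply, Int.abs_eq_natAbs]
  omega

theorem abs_avgUp_sub_avgDown_lt {y z : Fin n → ℤ} {i : Fin n} (h : 1 < (y i - z i).natAbs) :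
    |avgUp y z i - avgDown y z i| < |y i - z i| := by
  simp only [avgUp_apply, avgDown_apply, Int.abs_eq_natAbs]
  omega

theorem dotProduct_avgUp_add_dotProduct_avgDown_lt {y z : Fin n → ℤ} (h : 1 < linf (y - z)) :
    avgUp y z ⬝ᵥ avgUp y z + avgDown y z ⬝ᵥ avgDown y z < y ⬝ᵥ y + z ⬝ᵥ z := by
  have hadd (i : Fin n) : avgUp y z i + avgDown y z i = y i + z i :=
    congrFun (avgUp_add_avgDown y z) i
  obtain ⟨j, hj⟩ := lt_linf_iff.1 h
  simp only [dotProduct, ← sq, ← Finset.sum_add_distrib]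
  exact Finset.sum_lt_sum
    (fun i _ => (sq_add_sq_le_iff_of_add_eq (hadd i)).2 (abs_avgUp_sub_avgDown_le y z i))
    ⟨j, Finset.mem_univ j, (sq_add_sq_lt_iff_of_add_eq (hadd j)).2 (abs_avgUp_sub_avgDown_lt hj)⟩

theorem DMCSet.inter {S T : Set (Fin n → ℤ)} (hS : DMCSet S) (hT : DMCSet T) :
    DMCSet (S ∩ T) := fun _ hy _ hz h =>
  ⟨⟨(hS hy.1 hz.1 h).1, (hT hy.2 hz.2 h).1⟩, ⟨(hS hy.1 hz.1 h).2, (hT hy.2 hz.2 h).2⟩⟩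

theorem dmcSet_Icc (a b : Fin n → ℤ) : DMCSet (Set.Icc a b) := by
  rintro y ⟨hay, hyb⟩ z ⟨haz, hzb⟩ -
  refine ⟨⟨fun i => ?_, fun i => ?_⟩, fun i => ?_, fun i => ?_⟩ <;>
  · have hy : a i ≤ y i ∧ y i ≤ b i := ⟨hay i, hyb i⟩
    have hz : a i ≤ z i ∧ z i ≤ b i := ⟨haz i, hzb i⟩
    simp only [avgUp_apply, avgDown_apply]
    omega

/-- The inclusion of `ℤⁿ` into `ℝⁿ`, where `ℝⁿ` carries the sup norm. It is bundled as an additive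
homomorphism so that sums of integer vectors can be transported to `ℝⁿ`. -/
def intVecCast (n : ℕ) : (Fin n → ℤ) →+ (Fin n → ℝ) :=
  (Int.castAddHom ℝ).compLeft (Fin n)

theorem norm_intVecCast (z : Fin n → ℤ) : ‖intVecCast n z‖ = linf z := by
  rw [Pi.norm_def, linf, ← NNReal.coe_natCast,
    Finset.apply_sup_eq_sup_comp_of_linearOrder _ Nat.mono_cast Nat.cast_zero]
  congr 2
  ext i
  simp [intVecCast]

theorem mem_intNbhd_iff_norm {x : Fin n → ℝ} {z : Fin n → ℤ} :
    z ∈ intNbhd x ↔ ‖x - intVecCast n z‖ < 1 :=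
  (pi_norm_lt_iff (x := x - intVecCast n z) one_pos).symm

theorem DMCSet.linf_sub_le_one_of_isMinOn {T : Set (Fin n → ℤ)} [Fintype T] (hT : DMCSet T)
    {x : Fin n → ℝ} {w : T → ℝ} (hw : w ∈ convexWeights (fun t : T => intVecCast n t) x)
    (hmin : IsMinOn (Fintype.linearCombination ℝ fun t : T => ((t.1 ⬝ᵥ t.1 : ℤ) : ℝ))
      (convexWeights (fun t : T => intVecCast n t) x) w)
    {y z : T} (hy : 0 < w y) (hz : 0 < w z) : linf (y - z : Fin n → ℤ) ≤ 1 := by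
  by_contra! h
  obtain ⟨hup, hdown⟩ := hT y.2 z.2 h
  have hadd : intVecCast n (avgUp y z) + intVecCast n (avgDown y z) =
      intVecCast n y + intVecCast n z := by
    simp only [← map_add, avgUp_add_avgDown]
  have hle := add_le_add_of_isMinOn_convexWeights (k := ⟨_, hup⟩) (l := ⟨_, hdown⟩)
    hw hmin hy hz hadd
  exact (dotProduct_avgUp_add_dotProduct_avgDown_lt h).not_ge (by exact_mod_cast hle)

theorem mem_intNbhd_of_linf_sub_le_one {ι : Type*} [Fintype ι] {p : ι → Fin n → ℤ}
    {x : Fin n → ℝ} {w : ι → ℝ} (hw : w ∈ convexWeights (fun i => intVecCast n (p i)) x) {j : ι}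
    (hj : 0 < w j) (h : ∀ i, 0 < w i → linf (p i - p j) ≤ 1) : p j ∈ intNbhd x := by
  refine mem_intNbhd_iff_norm.2 (norm_sub_lt_of_mem_convexWeights hw one_pos hj fun i hi => ?_)
  rw [← map_sub, norm_intVecCast]
  exact_mod_cast h i hi

end IntegerVectors

/-- Every discrete midpoint convex set is integrally convex: each point of the
convex hull of `S` lies in the convex hull of `S ∩ N(x)`. -/
theorem dmcSet_integrallyConvex {n : ℕ} (S : Set (Fin n → ℤ)) (hS : DMCSet S)
    (x : Fin n → ℝ)
    (hx : x ∈ convexHull ℝ ((fun z : Fin n → ℤ => fun i => (z i : ℝ)) '' S)) :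
    x ∈ convexHull ℝ
      ((fun z : Fin n → ℤ => fun i => (z i : ℝ)) '' (S ∩ intNbhd x)) := by
  obtain ⟨a, b, hab⟩ := exists_mem_convexHull_image_inter_Icc hx
  have hT : DMCSet (S ∩ Set.Icc a b) := hS.inter (dmcSet_Icc a b)
  have : Fintype ↥(S ∩ Set.Icc a b) := ((Set.finite_Icc a b).inter_of_right S).fintype
  rw [Set.image_eq_range] at hab
  obtain ⟨w, hw, hmin⟩ := exists_isMinOn_convexWeights hab fun t => ((t.1 ⬝ᵥ t.1 : ℤ) : ℝ)
  refine convexHull_mono ?_ (mem_convexHull_image_pos hw)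
  rintro _ ⟨t, ht, rfl⟩
  have hclose : ∀ z, 0 < w z → linf (z - t : Fin n → ℤ) ≤ 1 := fun z hz =>
    hT.linf_sub_le_one_of_isMinOn hw hmin hz ht
  exact ⟨t, ⟨t.2.1, mem_intNbhd_of_linf_sub_le_one hw ht hclose⟩, rfl⟩
end

section
/- Let S ⊆ ℤⁿ be a discrete midpoint convex set, let x, y ∈ S, let m = ‖y − x‖∞, and let y − x = Σ_{k=1}^m (1_{A_k} − 1_{B_k}) be the canonical decomposition with A_k = {i : y_i − x_i ≥ m+1−k} and B_k = {i : y_i − x_i ≤ −k}. Then for every subset J ⊆ {1,…,m} and d = Σ_{k∈J} (1_{A_k} − 1_{B_k}), both x + d and y − d belong to S. -/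
/-!
What matters about a canonical decomposition is its shape: the steps increase with `k`, have entries
in `{-1, 0, 1}` and constant sign in each coordinate, and some coordinate is changed by every step.
A family of this shape is the canonical decomposition of its sum, and the shape passes to
subfamilies, so one can induct on the number `m` of steps. If `m ≥ 3` and a single step from `x`
stays in `S`, induction applied to the remaining steps, and then to pairs of steps, gives every
partial sum. To find such a step, round the midpoint of `x` and `x + t` and take an extreme step of
the canonical decomposition leading from `x` to it: rounding up yields step `m` of `t` unless `m` is
odd and `-m` is an entry of `t`, and rounding down yields step `1` unless `m` is odd and `m` is an
entry. For `m = 2` these are both steps. When `m` is odd and both `m` and `-m` are entries, rounding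
down yields the move `-1_{t < 0}`, after which `-m` is no longer an entry, and one more midpoint
recovers step `1`.
-/

open Finset

section Norm

variable {n : ℕ}

lemma natAbs_apply_le_linf (z : Fin n → ℤ) (i : Fin n) : (z i).natAbs ≤ linf z :=
  le_sup (f := fun i => (z i).natAbs) (mem_univ i)

lemma linf_eq_of_natAbs_eq {z : Fin n → ℤ} {m : ℕ} (hle : ∀ i, (z i).natAbs ≤ m) {i : Fin n}
    (hi : (z i).natAbs = m) : linf z = m :=
  le_antisymm (Finset.sup_le fun j _ => hle j) (hi ▸ natAbs_apply_le_linf z i)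

lemma exists_natAbs_eq_linf {z : Fin n → ℤ} (hz : 0 < linf z) :
    ∃ i, (z i).natAbs = linf z := by
  have huniv : (univ : Finset (Fin n)).Nonempty := by
    by_contra hempty
    simp [linf, not_nonempty_iff_eq_empty.1 hempty] at hz
  obtain ⟨i, -, hi⟩ := exists_mem_eq_sup univ huniv fun i => (z i).natAbs
  exact ⟨i, hi.symm⟩

end Norm

section Midpoint

variable {n : ℕ} {S : Set (Fin n → ℤ)} {x t : Fin n → ℤ}

lemma avgUp_add_right (x t : Fin n → ℤ) :
    avgUp x (x + t) = x + fun i => (t i + 1) / 2 := by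
  funext i
  have hceil := Rat.ceil_intCast_div_natCast (x i + (x i + t i)) 2
  push_cast at hceil
  simp only [avgUp, Pi.add_apply, Int.cast_add, hceil]
  omega

lemma avgDown_add_right (x t : Fin n → ℤ) :
    avgDown x (x + t) = x + fun i => t i / 2 := by
  funext i
  have hfloor := Rat.floor_intCast_div_natCast (x i + (x i + t i)) 2
  push_cast at hfloor
  simp only [avgDown, Pi.add_apply, Int.cast_add, hfloor]
  omega

lemma linf_sub_add_right (x t : Fin n → ℤ) : linf (x - (x + t)) = linf t := by
  simp [linf]

lemma DMCSet.add_ceil_half_mem (hS : DMCSet S) (hx : x ∈ S) (hxt : x + t ∈ S)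
    (ht : 2 ≤ linf t) : (x + fun i => (t i + 1) / 2) ∈ S :=
  avgUp_add_right x t ▸ (hS hx hxt (by rwa [linf_sub_add_right])).1

lemma DMCSet.add_floor_half_mem (hS : DMCSet S) (hx : x ∈ S) (hxt : x + t ∈ S)
    (ht : 2 ≤ linf t) : (x + fun i => t i / 2) ∈ S :=
  avgDown_add_right x t ▸ (hS hx hxt (by rwa [linf_sub_add_right])).2

end Midpoint

section StepChain

variable {ι κ : Type*}

/-- The `k`-th step `1_{A_k} - 1_{B_k}` of the canonical decomposition of `t`, where
`A_k = {i : t i ≥ m + 1 - k}` and `B_k = {i : t i ≤ -k}`. The decomposition is meant for `t` of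
norm `m`, and for `k` from `1` to `m`. -/
def canonicalStep (m : ℕ) (t : ι → ℤ) (k : ℕ) : ι → ℤ := fun i =>
  (if (m : ℤ) + 1 - (k : ℤ) ≤ t i then (1 : ℤ) else 0) - (if t i ≤ -(k : ℤ) then (1 : ℤ) else 0)

/-- The vectors `v k`, for `k ∈ K`, have the shape of a canonical decomposition. In terms of
`v k = 1_{A_k} - 1_{B_k}`: the sets `A_k` increase and the sets `B_k` decrease with `k`, no `A_j`
meets a `B_k`, and some coordinate belongs to all the `A_k` or to all the `B_k`. -/
structure IsStepChain [Preorder κ] (K : Finset κ) (v : κ → ι → ℤ) : Prop where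
  monotoneOn : MonotoneOn v K
  mem_Icc_or (i : ι) : (∀ k ∈ K, v k i ∈ Set.Icc 0 1) ∨ ∀ k ∈ K, v k i ∈ Set.Icc (-1) 0
  exists_const : ∃ i, (∀ k ∈ K, v k i = 1) ∨ ∀ k ∈ K, v k i = -1

lemma IsStepChain.mono [Preorder κ] {J K : Finset κ} {v : κ → ι → ℤ} (hv : IsStepChain K v)
    (hJ : J ⊆ K) : IsStepChain J v where
  monotoneOn := hv.monotoneOn.mono (coe_subset.2 hJ)
  mem_Icc_or i := (hv.mem_Icc_or i).imp (fun h k hk => h k (hJ hk)) fun h k hk => h k (hJ hk)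
  exists_const := hv.exists_const.imp fun _ =>
    Or.imp (fun h k hk => h k (hJ hk)) fun h k hk => h k (hJ hk)

lemma IsStepChain.linf_sum [Preorder κ] {n : ℕ} {K : Finset κ} {v : κ → Fin n → ℤ}
    (hv : IsStepChain K v) : linf (∑ k ∈ K, v k) = #K := by
  obtain ⟨i, hi⟩ := hv.exists_const
  refine linf_eq_of_natAbs_eq (i := i) (fun j => ?_) ?_
  · have hle : ∀ k ∈ K, (v k j).natAbs ≤ 1 := fun k hk => by
      rcases hv.mem_Icc_or j with h | h <;> have := Set.mem_Icc.1 (h k hk) <;> omega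
    calc ((∑ k ∈ K, v k) j).natAbs
        ≤ ∑ k ∈ K, (v k j).natAbs := by
          rw [Finset.sum_apply]
          exact Int.natAbs_sum_le K fun k => v k j
      _ ≤ #K := by simpa using sum_le_card_nsmul K _ 1 hle
  · rcases hi with h | h <;> simp [sum_congr rfl h]

lemma sum_eq_sum_lt_add_add_sum_gt [LinearOrder κ] {M : Type*} [AddCommMonoid M] {K : Finset κ}
    {k : κ} (hk : k ∈ K) (f : κ → M) :
    ∑ j ∈ K, f j = (∑ j ∈ K with j < k, f j) + f k + ∑ j ∈ K with k < j, f j := by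
  have hge : {j ∈ K | ¬ j < k} = insert k {j ∈ K | k < j} := by
    ext j; simp only [mem_filter, mem_insert]; grind
  rw [← sum_filter_add_sum_filter_not K (· < k), hge, sum_insert (by simp), add_assoc]

/-- Steps after `k` are bounded by the value at `k` from below and steps before it from above, so
the value of the sum at a coordinate tells the value of `v k` there. -/
lemma IsStepChain.eq_canonicalStep [LinearOrder κ] {K : Finset κ} {v : κ → ι → ℤ}
    (hv : IsStepChain K v) {k : κ} (hk : k ∈ K) :
    v k = canonicalStep #K (∑ j ∈ K, v j) (#{j ∈ K | j < k} + 1) := by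
  funext i
  have hmono : ∀ {a b}, a ∈ K → b ∈ K → a ≤ b → v a i ≤ v b i := fun ha hb hab =>
    hv.monotoneOn ha hb hab i
  have hbefore : ∑ j ∈ K with j < k, v j i ≤ #{j ∈ K | j < k} * v k i := by
    rw [← nsmul_eq_mul]
    exact sum_le_card_nsmul _ _ _ fun j hj =>
      hmono (mem_filter.1 hj).1 hk (mem_filter.1 hj).2.le
  have hafter : #{j ∈ K | k < j} * v k i ≤ ∑ j ∈ K with k < j, v j i := by
    rw [← nsmul_eq_mul]
    exact card_nsmul_le_sum _ _ _ fun j hj =>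
      hmono hk (mem_filter.1 hj).1 (mem_filter.1 hj).2.le
  have hcard : #K = #{j ∈ K | j < k} + 1 + #{j ∈ K | k < j} := by
    simpa only [card_eq_sum_ones] using sum_eq_sum_lt_add_add_sum_gt hk fun _ => 1
  have hsum := sum_eq_sum_lt_add_add_sum_gt hk fun j => v j i
  simp only [canonicalStep, Finset.sum_apply]
  rcases hv.mem_Icc_or i with h | h
  · have hbefore_nonneg : 0 ≤ ∑ j ∈ K with j < k, v j i :=
      sum_nonneg fun j hj => (h j (mem_filter.1 hj).1).1
    have hafter_le : ∑ j ∈ K with k < j, v j i ≤ #{j ∈ K | k < j} := by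
      simpa using sum_le_card_nsmul _ _ 1 fun j hj => (h j (mem_filter.1 hj).1).2
    obtain hvk | hvk : v k i = 0 ∨ v k i = 1 := by have := Set.mem_Icc.1 (h k hk); omega
    all_goals
      simp only [hvk, mul_zero, mul_one] at hbefore hafter hsum ⊢
      split_ifs <;> omega
  · have hbefore_ge : -(#{j ∈ K | j < k} : ℤ) ≤ ∑ j ∈ K with j < k, v j i := by
      simpa using card_nsmul_le_sum _ _ (-1) fun j hj => (h j (mem_filter.1 hj).1).1
    have hafter_nonpos : ∑ j ∈ K with k < j, v j i ≤ 0 :=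
      sum_nonpos fun j hj => (h j (mem_filter.1 hj).1).2
    obtain hvk | hvk : v k i = 0 ∨ v k i = -1 := by have := Set.mem_Icc.1 (h k hk); omega
    all_goals
      simp only [hvk, mul_zero, mul_neg, mul_one] at hbefore hafter hsum ⊢
      split_ifs <;> omega

lemma IsStepChain.eq_canonicalStep_one [LinearOrder κ] {K : Finset κ} {v : κ → ι → ℤ}
    (hv : IsStepChain K v) {k : κ} (hk : IsLeast (K : Set κ) k) :
    v k = canonicalStep #K (∑ j ∈ K, v j) 1 := by
  have hbefore : {j ∈ K | j < k} = ∅ := filter_eq_empty_iff.2 fun _ hj => (hk.2 hj).not_gt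
  simpa [hbefore] using hv.eq_canonicalStep hk.1

lemma IsStepChain.eq_canonicalStep_card [LinearOrder κ] {K : Finset κ} {v : κ → ι → ℤ}
    (hv : IsStepChain K v) {k : κ} (hk : IsGreatest (K : Set κ) k) :
    v k = canonicalStep #K (∑ j ∈ K, v j) #K := by
  have hbefore : {j ∈ K | j < k} = K.erase k := by
    ext j
    rw [mem_filter, mem_erase, and_comm]
    exact and_congr_left fun hj => ⟨ne_of_lt, (hk.2 hj).lt_of_ne⟩
  simpa [hbefore, card_erase_add_one (mem_coe.1 hk.1)] using hv.eq_canonicalStep hk.1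

lemma isStepChain_canonicalStep {m : ℕ} {t : ι → ℤ} {i : ι} (hi : (t i).natAbs = m) :
    IsStepChain (Icc 1 m) (canonicalStep m t) where
  monotoneOn j _ k _ hjk l := by
    simp only [canonicalStep]
    split_ifs <;> omega
  mem_Icc_or l := by
    refine (le_total 0 (t l)).imp (fun hl k hk => ?_) fun hl k hk => ?_ <;>
    · rw [mem_Icc] at hk
      rw [Set.mem_Icc, canonicalStep]
      split_ifs <;> omega
  exists_const := by
    refine ⟨i, (Int.natAbs_eq (t i)).imp (fun _ k hk => ?_) fun _ k hk => ?_⟩ <;>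
    · rw [mem_Icc] at hk
      rw [canonicalStep]
      split_ifs <;> omega

lemma sum_canonicalStep {m : ℕ} {t : ι → ℤ} (ht : ∀ i, (t i).natAbs ≤ m) :
    ∑ k ∈ Icc 1 m, canonicalStep m t k = t := by
  funext i
  have hA : {k ∈ Icc 1 m | (m : ℤ) + 1 - ((k : ℕ) : ℤ) ≤ t i} = Icc (m + 1 - (t i).toNat) m := by
    ext k; have := ht i; simp only [mem_filter, mem_Icc]; omega
  have hB : {k ∈ Icc 1 m | t i ≤ -((k : ℕ) : ℤ)} = Icc 1 (-t i).toNat := by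
    ext k; have := ht i; simp only [mem_filter, mem_Icc]; omega
  simp only [Finset.sum_apply, canonicalStep, sum_sub_distrib, sum_boole, hA, hB, Nat.card_Icc]
  have := ht i
  omega

end StepChain

section Parallelogram

variable {n : ℕ} {S : Set (Fin n → ℤ)} {x t : Fin n → ℤ} {m : ℕ}

/-- If the sum of a chain of `m` steps leads from one point of `S` to another, then every partial
sum leads to a point of `S`. The chains are arbitrary, rather than canonical decompositions, so that
the property for `m` can be applied to `m` of the steps of a longer chain. -/
def HasParallelogramProperty (S : Set (Fin n → ℤ)) (m : ℕ) : Prop :=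
  ∀ ⦃K : Finset ℕ⦄ ⦃v : ℕ → Fin n → ℤ⦄, IsStepChain K v → #K = m →
    ∀ ⦃x⦄, x ∈ S → x + ∑ k ∈ K, v k ∈ S → ∀ J ⊆ K, x + ∑ k ∈ J, v k ∈ S

lemma HasParallelogramProperty.add_sum_canonicalStep_mem (hP : HasParallelogramProperty S m)
    (ht : linf t = m) (hx : x ∈ S) (hxt : x + t ∈ S) {J : Finset ℕ} (hJ : J ⊆ Icc 1 m) :
    x + ∑ k ∈ J, canonicalStep m t k ∈ S := by
  rcases J.eq_empty_or_nonempty with rfl | ⟨k, hk⟩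
  · simpa using hx
  · have hkm := mem_Icc.1 (hJ hk)
    obtain ⟨i, hi⟩ := exists_natAbs_eq_linf (z := t) (by omega)
    refine hP (isStepChain_canonicalStep (hi.trans ht)) (by simp) hx ?_ J hJ
    rwa [sum_canonicalStep fun i => ht ▸ natAbs_apply_le_linf t i]

lemma HasParallelogramProperty.add_canonicalStep_mem (hP : HasParallelogramProperty S m)
    (ht : linf t = m) (hx : x ∈ S) (hxt : x + t ∈ S) {k : ℕ} (hk : k ∈ Icc 1 m) :
    x + canonicalStep m t k ∈ S := by
  simpa using hP.add_sum_canonicalStep_mem ht hx hxt (singleton_subset_iff.2 hk)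

namespace IsStepChain

variable {K J : Finset ℕ} {v : ℕ → Fin n → ℤ}

lemma add_sum_mem_of_mem (hv : IsStepChain K v) (hP : ∀ l < #K, HasParallelogramProperty S l)
    (hxK : x + ∑ k ∈ K, v k ∈ S) {k : ℕ} (hxk : x + v k ∈ S) (hJ : J ⊆ K) (hk : k ∈ J) :
    x + ∑ j ∈ J, v j ∈ S := by
  rw [← add_sum_erase K v (hJ hk), ← add_assoc] at hxK
  rw [← add_sum_erase J v hk, ← add_assoc]
  exact hP _ (card_erase_lt_of_mem (hJ hk)) (hv.mono (erase_subset k K)) rfl hxk hxK _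
    (erase_subset_erase k hJ)

lemma add_sum_mem_of_forall_add_mem (hv : IsStepChain K v)
    (hP : ∀ l < #K, HasParallelogramProperty S l) (hx : x ∈ S) (hxK : x + ∑ k ∈ K, v k ∈ S)
    (hstep : ∀ k ∈ K, x + v k ∈ S) (hJ : J ⊆ K) : x + ∑ j ∈ J, v j ∈ S := by
  rcases J.eq_empty_or_nonempty with rfl | ⟨k, hk⟩
  · simpa using hx
  · exact hv.add_sum_mem_of_mem hP hxK (hstep k (hJ hk)) hJ hk

lemma add_sum_mem_of_add_mem (hv : IsStepChain K v) (hP : ∀ l < #K, HasParallelogramProperty S l)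
    (hK : 3 ≤ #K) (hx : x ∈ S) (hxK : x + ∑ k ∈ K, v k ∈ S) {k : ℕ} (hk : k ∈ K)
    (hxk : x + v k ∈ S) (hJ : J ⊆ K) : x + ∑ j ∈ J, v j ∈ S := by
  refine hv.add_sum_mem_of_forall_add_mem hP hx hxK (fun j hj => ?_) hJ
  have hpair : {k, j} ⊆ K := insert_subset hk (singleton_subset_iff.2 hj)
  have hxkj : x + ∑ l ∈ {k, j}, v l ∈ S :=
    hv.add_sum_mem_of_mem hP hxK hxk hpair (mem_insert_self k _)
  simpa using hP _ (card_le_two.trans_lt hK) (hv.mono hpair) rfl hx hxkj {j} (by simp)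

end IsStepChain

namespace DMCSet

lemma add_canonicalStep_self_mem (hS : DMCSet S) (hP : ∀ l < m, HasParallelogramProperty S l)
    (hm : 2 ≤ m) (ht : linf t = m) (h : Even m ∨ ∀ i, t i ≠ -m) (hx : x ∈ S) (hxt : x + t ∈ S) :
    x + canonicalStep m t m ∈ S := by
  have hle (i) : (t i).natAbs ≤ m := ht ▸ natAbs_apply_le_linf t i
  obtain ⟨i, hi⟩ := exists_natAbs_eq_linf (z := t) (by omega)
  rw [Nat.even_iff] at h
  have hhalf : linf (fun i => (t i + 1) / 2) = (m + 1) / 2 :=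
    linf_eq_of_natAbs_eq (fun j => by have := hle j; omega) (i := i)
      (by have := h.imp_right (· i); omega)
  have hstep : canonicalStep ((m + 1) / 2) (fun i => (t i + 1) / 2) ((m + 1) / 2) =
      canonicalStep m t m := by
    funext j
    have := hle j
    have := h.imp_right (· j)
    simp only [canonicalStep]
    split_ifs <;> omega
  rw [← hstep]
  exact (hP _ (by omega)).add_canonicalStep_mem hhalf hx
    (hS.add_ceil_half_mem hx hxt (by omega)) (mem_Icc.2 (by omega))

lemma add_canonicalStep_floor_half_mem (hS : DMCSet S)
    (hP : ∀ l < m, HasParallelogramProperty S l) (hm : 2 ≤ m) (ht : linf t = m)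
    (h : Even m ∨ ∃ i, t i = -m) (hx : x ∈ S) (hxt : x + t ∈ S) {k : ℕ}
    (hk : k ∈ Icc 1 ((m + 1) / 2)) :
    x + canonicalStep ((m + 1) / 2) (fun i => t i / 2) k ∈ S := by
  have hle (i) : (t i).natAbs ≤ m := ht ▸ natAbs_apply_le_linf t i
  have hhalf_le (i) : (t i / 2).natAbs ≤ (m + 1) / 2 := by have := hle i; omega
  have hhalf : linf (fun i => t i / 2) = (m + 1) / 2 := by
    rcases h with ⟨r, rfl⟩ | ⟨i, hi⟩
    · obtain ⟨i, hi⟩ := exists_natAbs_eq_linf (z := t) (by omega)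
      exact linf_eq_of_natAbs_eq hhalf_le (i := i) (by omega)
    · exact linf_eq_of_natAbs_eq hhalf_le (i := i) (by omega)
  exact (hP _ (by omega)).add_canonicalStep_mem hhalf hx
    (hS.add_floor_half_mem hx hxt (by omega)) hk

lemma add_canonicalStep_one_mem (hS : DMCSet S) (hP : ∀ l < m, HasParallelogramProperty S l)
    (hm : 2 ≤ m) (ht : linf t = m) (h : Even m ∨ ∀ i, t i ≠ m) (hx : x ∈ S) (hxt : x + t ∈ S) :
    x + canonicalStep m t 1 ∈ S := by
  have hle (i) : (t i).natAbs ≤ m := ht ▸ natAbs_apply_le_linf t i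
  obtain ⟨i, hi⟩ := exists_natAbs_eq_linf (z := t) (by omega)
  have hneg : Even m ∨ ∃ i, t i = -m := h.imp_right fun hpos => ⟨i, by have := hpos i; omega⟩
  have hstep : canonicalStep ((m + 1) / 2) (fun i => t i / 2) 1 = canonicalStep m t 1 := by
    funext j
    rw [Nat.even_iff] at h
    have := hle j
    have := h.imp_right (· j)
    simp only [canonicalStep]
    split_ifs <;> omega
  exact hstep ▸ hS.add_canonicalStep_floor_half_mem hP hm ht hneg hx hxt (mem_Icc.2 (by omega))

lemma add_ite_neg_mem_of_odd (hS : DMCSet S) (hP : ∀ l < m, HasParallelogramProperty S l)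
    (hm : 2 ≤ m) (hodd : Odd m) (ht : linf t = m) (hneg : ∃ i, t i = -m) (hx : x ∈ S)
    (hxt : x + t ∈ S) : (x + fun i => if t i < 0 then -1 else 0) ∈ S := by
  have hstep : canonicalStep ((m + 1) / 2) (fun i => t i / 2) 1 =
      fun i => if t i < 0 then -1 else 0 := by
    funext i
    obtain ⟨r, rfl⟩ := hodd
    have : (t i).natAbs ≤ 2 * r + 1 := ht ▸ natAbs_apply_le_linf t i
    simp only [canonicalStep]
    split_ifs <;> omega
  exact hstep ▸ hS.add_canonicalStep_floor_half_mem hP hm ht (.inr hneg) hx hxt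
    (mem_Icc.2 (by omega))

lemma add_sum_canonicalStep_mem_of_ne_neg (hS : DMCSet S)
    (hP : ∀ l < m, HasParallelogramProperty S l) (hm : 3 ≤ m) (ht : linf t = m)
    (hneg : ∀ i, t i ≠ -m) (hx : x ∈ S) (hxt : x + t ∈ S) {J : Finset ℕ} (hJ : J ⊆ Icc 1 m) :
    x + ∑ k ∈ J, canonicalStep m t k ∈ S := by
  obtain ⟨i, hi⟩ := exists_natAbs_eq_linf (z := t) (by omega)
  have hcard : #(Icc 1 m) = m := by simp
  refine (isStepChain_canonicalStep (hi.trans ht)).add_sum_mem_of_add_mem (by rwa [hcard])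
    (hm.trans_eq hcard.symm) hx ?_ (right_mem_Icc.2 (by omega))
    (hS.add_canonicalStep_self_mem hP (by omega) ht (.inr hneg) hx hxt) hJ
  rwa [sum_canonicalStep fun i => ht ▸ natAbs_apply_le_linf t i]

lemma add_canonicalStep_one_mem_of_odd (hS : DMCSet S)
    (hP : ∀ l < m, HasParallelogramProperty S l) (hm : 3 ≤ m) (hodd : Odd m) (ht : linf t = m)
    {i j : Fin n} (hi : t i = m) (hj : t j = -m) (hx : x ∈ S) (hxt : x + t ∈ S) :
    x + canonicalStep m t 1 ∈ S := by
  have hle (l) : (t l).natAbs ≤ m := ht ▸ natAbs_apply_le_linf t l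
  set w : Fin n → ℤ := fun l => if t l < 0 then -1 else 0 with hw
  have hxw : x + w ∈ S := hS.add_ite_neg_mem_of_odd hP (by omega) hodd ht ⟨j, hj⟩ hx hxt
  have hlinf : linf (t - w) = m := by
    refine linf_eq_of_natAbs_eq (i := i) (fun l => ?_) ?_ <;> simp only [hw, Pi.sub_apply]
    · have := hle l
      split_ifs <;> omega
    · split_ifs <;> omega
  have hne_neg (l) : (t - w) l ≠ -m := by
    have := hle l
    simp only [hw, Pi.sub_apply]
    split_ifs <;> omega
  set z := w + (canonicalStep m (t - w) 1 + canonicalStep m (t - w) m) with hz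
  have hxz : x + z ∈ S := by
    rw [hz, ← add_assoc, ← sum_pair (show 1 ≠ m by omega)]
    refine hS.add_sum_canonicalStep_mem_of_ne_neg hP hm hlinf hne_neg hxw (by simpa using hxt) ?_
    exact insert_subset (mem_Icc.2 (by omega)) (singleton_subset_iff.2 (mem_Icc.2 (by omega)))
  have hz_apply (l) : z l =
      if t l = m then 2 else if 0 < t l then 1 else if t l = 0 then 0 else
        if t l = -1 then -1 else -2 := by
    have := hle l
    simp only [hz, hw, canonicalStep, Pi.add_apply, Pi.sub_apply]
    split_ifs <;> omega
  have hz_linf : 2 ≤ linf z := le_trans (by simp [hz_apply, hi]) (natAbs_apply_le_linf z i)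
  have hhalf : (fun l => z l / 2) = canonicalStep m t 1 := by
    funext l
    have := hle l
    simp only [hz_apply, canonicalStep]
    split_ifs <;> omega
  exact hhalf ▸ hS.add_floor_half_mem hx hxz hz_linf

lemma exists_mem_add_mem (hS : DMCSet S) {K : Finset ℕ} {v : ℕ → Fin n → ℤ}
    (hv : IsStepChain K v) (hP : ∀ l < #K, HasParallelogramProperty S l) (hK : 3 ≤ #K)
    (hx : x ∈ S) (hxK : x + ∑ k ∈ K, v k ∈ S) : ∃ k ∈ K, x + v k ∈ S := by
  have hne : K.Nonempty := card_pos.1 (by omega)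
  by_cases hneg : ∀ i, (∑ k ∈ K, v k) i ≠ -#K
  · have hmax := isGreatest_max' K hne
    refine ⟨K.max' hne, hmax.1, ?_⟩
    rw [hv.eq_canonicalStep_card hmax]
    exact hS.add_canonicalStep_self_mem hP (by omega) hv.linf_sum (.inr hneg) hx hxK
  have hmin := isLeast_min' K hne
  refine ⟨K.min' hne, hmin.1, ?_⟩
  rw [hv.eq_canonicalStep_one hmin]
  by_cases hpos : Even #K ∨ ∀ i, (∑ k ∈ K, v k) i ≠ #K
  · exact hS.add_canonicalStep_one_mem hP (by omega) hv.linf_sum hpos hx hxK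
  push Not at hneg hpos
  obtain ⟨j, hj⟩ := hneg
  obtain ⟨hodd, i, hi⟩ := hpos
  exact hS.add_canonicalStep_one_mem_of_odd hP hK (Nat.not_even_iff_odd.1 hodd) hv.linf_sum hi hj
    hx hxK

lemma add_mem_of_card_eq_two (hS : DMCSet S) {K : Finset ℕ} {v : ℕ → Fin n → ℤ}
    (hv : IsStepChain K v) (hP : ∀ l < #K, HasParallelogramProperty S l) (hK : #K = 2)
    (hx : x ∈ S) (hxK : x + ∑ k ∈ K, v k ∈ S) {k : ℕ} (hk : k ∈ K) : x + v k ∈ S := by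
  have hlt : #{j ∈ K | j < k} < #K := card_lt_card (filter_ssubset.2 ⟨k, hk, lt_irrefl k⟩)
  rw [hv.eq_canonicalStep hk]
  have heven : Even #K := hK ▸ even_two
  obtain hrank | hrank : #{j ∈ K | j < k} + 1 = 1 ∨ #{j ∈ K | j < k} + 1 = #K := by omega
  · rw [hrank]
    exact hS.add_canonicalStep_one_mem hP hK.ge hv.linf_sum (.inl heven) hx hxK
  · rw [hrank]
    exact hS.add_canonicalStep_self_mem hP hK.ge hv.linf_sum (.inl heven) hx hxK

theorem hasParallelogramProperty (hS : DMCSet S) (m : ℕ) : HasParallelogramProperty S m := by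
  induction m using Nat.strong_induction_on with
  | _ m hP =>
    rintro K v hv rfl x hx hxK J hJ
    obtain hK | hK | hK : #K ≤ 1 ∨ #K = 2 ∨ 3 ≤ #K := by omega
    · rcases J.eq_empty_or_nonempty with rfl | hne
      · simpa using hx
      · rwa [eq_of_subset_of_card_le hJ (hK.trans hne.card_pos)]
    · exact hv.add_sum_mem_of_forall_add_mem hP hx hxK
        (fun k hk => hS.add_mem_of_card_eq_two hv hP hK hx hxK hk) hJ
    · obtain ⟨k, hk, hxk⟩ := hS.exists_mem_add_mem hv hP hK hx hxK
      exact hv.add_sum_mem_of_add_mem hP hK hx hxK hk hxk hJ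

end DMCSet

end Parallelogram

/-- The "parallelogram property" of discrete midpoint convex sets: with
`m = ‖y − x‖∞`, `A_k = {i : y_i − x_i ≥ m+1−k}`, `B_k = {i : y_i − x_i ≤ −k}`,
and `d = Σ_{k∈J} (1_{A_k} − 1_{B_k})` for `J ⊆ {1,…,m}`, both `x + d` and
`y − d` belong to `S`. -/
theorem dmcSet_parallelogram {n : ℕ} (S : Set (Fin n → ℤ)) (hS : DMCSet S)
    (x y : Fin n → ℤ) (hx : x ∈ S) (hy : y ∈ S)
    (m : ℕ) (hm : m = linf (y - x))
    (J : Finset ℕ) (hJ : J ⊆ Finset.Icc 1 m)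
    (d : Fin n → ℤ)
    (hd : d = fun i => ∑ k ∈ J,
      ((if (m : ℤ) + 1 - (k : ℤ) ≤ y i - x i then (1 : ℤ) else 0)
        - (if y i - x i ≤ -(k : ℤ) then (1 : ℤ) else 0))) :
    x + d ∈ S ∧ y - d ∈ S := by
  have hmem : ∀ K ⊆ Icc 1 m, x + ∑ k ∈ K, canonicalStep m (y - x) k ∈ S := fun _ hK =>
    (hS.hasParallelogramProperty m).add_sum_canonicalStep_mem hm.symm hx (by simpa using hy) hK
  obtain rfl : d = ∑ k ∈ J, canonicalStep m (y - x) k := by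
    rw [hd]
    funext i
    exact (Finset.sum_apply i J (canonicalStep m (y - x))).symm
  have hcompl : ∑ k ∈ Icc 1 m \ J, canonicalStep m (y - x) k =
      y - x - ∑ k ∈ J, canonicalStep m (y - x) k :=
    eq_sub_of_add_eq <| (sum_sdiff hJ).trans <|
      sum_canonicalStep fun i => hm ▸ natAbs_apply_le_linf (y - x) i
  refine ⟨hmem J hJ, ?_⟩
  simpa [hcompl, add_sub] using hmem (Icc 1 m \ J) sdiff_subset
end

section
/- Every L♮-convex function f : ℤⁿ → ℝ ∪ {+∞} is globally discrete midpoint convex; that is, if f(x) + f(y) ≥ f((x − μ1) ∨ y) + f(x ∧ (y + μ1)) for all x, y ∈ ℤⁿ and all nonnegative integers μ (where 1 = (1,…,1) and ∨, ∧ denote componentwise max and min), then f(x) + f(y) ≥ f(⌈(x+y)/2⌉) + f(⌊(x+y)/2⌋) for all x, y ∈ ℤⁿ with ‖x − y‖∞ ≥ 2. -/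
/-- `f` satisfies discrete midpoint convexity for the pair `(x, y)`.
Values are in `ℝ ∪ {+∞}`, modeled as `WithTop ℝ`. -/
def DMCPair {n : ℕ} (f : (Fin n → ℤ) → WithTop ℝ) (x y : Fin n → ℤ) : Prop :=
  f (avgUp x y) + f (avgDown x y) ≤ f x + f y

/-- `f` is globally discrete midpoint convex. -/
def GloballyDMC {n : ℕ} (f : (Fin n → ℤ) → WithTop ℝ) : Prop :=
  ∀ x y : Fin n → ℤ, 2 ≤ linf (x - y) → DMCPair f x y

/-- The effective domain of `f`. -/
def effDom {n : ℕ} (f : (Fin n → ℤ) → WithTop ℝ) : Set (Fin n → ℤ) :=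
  {x | f x ≠ ⊤}

/-- `f` is locally discrete midpoint convex. -/
def LocallyDMC {n : ℕ} (f : (Fin n → ℤ) → WithTop ℝ) : Prop :=
  DMCSet (effDom f) ∧ ∀ x y : Fin n → ℤ, linf (x - y) = 2 → DMCPair f x y

/-!
Replace `(x, y)` by `(x ⊔ y, x ⊓ y)` and then let these two points approach each other by one unit.
This does not increase `f x + f y` and preserves `x + y`, hence the rounded midpoints. It shortens
every coordinate distance of at least `2` by `2` and leaves the smaller ones unchanged. Once all
distances are at most `1`, the join and the meet are the rounded midpoints.
-/

lemma sub_sup_add_inf_add {G : Type*} [Lattice G] [AddCommGroup G] [AddLeftMono G] (a b c : G) :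
    ((a - c) ⊔ b) + (a ⊓ (b + c)) = a + b := by
  have hsup : (a - c) ⊔ b = a + b - a ⊓ (b + c) := by
    rw [sub_eq_add_neg (a + b), neg_inf, add_sup, sup_comm]
    congr 1 <;> abel
  rw [hsup, sub_add_cancel]

lemma abs_sub_one_sup_inf_sub_sup_inf_add_one_le (a b : ℤ) :
    |((a ⊔ b - 1) ⊔ (a ⊓ b)) - ((a ⊔ b) ⊓ (a ⊓ b + 1))| ≤ max 1 (|a - b| - 2) := by
  simp only [abs_eq_max_neg]
  omega

lemma add_add_one_ediv_two_eq_sup {a b : ℤ} (h : |a - b| ≤ 1) : (a + b + 1) / 2 = a ⊔ b := by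
  rw [abs_le] at h
  omega

lemma add_ediv_two_eq_inf {a b : ℤ} (h : |a - b| ≤ 1) : (a + b) / 2 = a ⊓ b := by
  rw [abs_le] at h
  omega

section TranslationSubmodular

variable {ι M : Type*} [Add M] [Preorder M] {f : (ι → ℤ) → M}

lemma add_midpoints_le_of_abs_sub_le
    (hsub : ∀ x y, f (x ⊔ y) + f (x ⊓ y) ≤ f x + f y)
    (happroach : ∀ x y, f ((x - 1) ⊔ y) + f (x ⊓ (y + 1)) ≤ f x + f y)
    (N : ℕ) {x y : ι → ℤ} (hxy : ∀ i, |x i - y i| ≤ N + 1) :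
    f ((x + y + 1) / 2) + f ((x + y) / 2) ≤ f x + f y := by
  induction N generalizing x y with
  | zero =>
    have hclose : ∀ i, |x i - y i| ≤ 1 := by simpa using hxy
    have hup : (x + y + 1) / 2 = x ⊔ y := funext fun i => add_add_one_ediv_two_eq_sup (hclose i)
    have hdown : (x + y) / 2 = x ⊓ y := funext fun i => add_ediv_two_eq_inf (hclose i)
    rw [hup, hdown]
    exact hsub x y
  | succ N ih =>
    let p := (x ⊔ y - 1) ⊔ (x ⊓ y)
    let q := (x ⊔ y) ⊓ (x ⊓ y + 1)
    have hsum : p + q = x + y := by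
      rw [sub_sup_add_inf_add, add_comm, inf_add_sup]
    have hpq : ∀ i, |p i - q i| ≤ N + 1 := fun i => by
      have hshrink : |p i - q i| ≤ max 1 (|x i - y i| - 2) :=
        abs_sub_one_sup_inf_sub_sup_inf_add_one_le (x i) (y i)
      have hi := hxy i
      omega
    calc f ((x + y + 1) / 2) + f ((x + y) / 2)
        = f ((p + q + 1) / 2) + f ((p + q) / 2) := by rw [hsum]
      _ ≤ f p + f q := ih hpq
      _ ≤ f (x ⊔ y) + f (x ⊓ y) := happroach (x ⊔ y) (x ⊓ y)
      _ ≤ f x + f y := hsub x y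

theorem lnatConvex_globallyDMC_general
    (hsub : ∀ x y, f (x ⊔ y) + f (x ⊓ y) ≤ f x + f y)
    (happroach : ∀ x y, f ((x - 1) ⊔ y) + f (x ⊓ (y + 1)) ≤ f x + f y)
    {x y : ι → ℤ} (hxy : BddAbove (Set.range fun i => |x i - y i|)) :
    f ((x + y + 1) / 2) + f ((x + y) / 2) ≤ f x + f y := by
  obtain ⟨B, hB⟩ := hxy
  refine add_midpoints_le_of_abs_sub_le hsub happroach B.toNat fun i => ?_
  have hi : |x i - y i| ≤ B := hB ⟨i, rfl⟩
  omega

end TranslationSubmodular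

lemma avgUp_eq {n : ℕ} (x y : Fin n → ℤ) : avgUp x y = (x + y + 1) / 2 := by
  funext i
  have hceil : avgUp x y i = -(-(x i + y i) / 2) := by
    simpa [avgUp] using Rat.ceil_intCast_div_natCast (x i + y i) 2
  simp only [hceil, Pi.div_apply, Pi.add_apply, Pi.ofNat_apply]
  omega

lemma avgDown_eq {n : ℕ} (x y : Fin n → ℤ) : avgDown x y = (x + y) / 2 := by
  funext i
  simpa [avgDown] using Rat.floor_intCast_div_natCast (x i + y i) 2

/-- Every L♮-convex function (defined via translation-submodularity) is
globally discrete midpoint convex. -/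
theorem lnatConvex_globallyDMC {n : ℕ} (f : (Fin n → ℤ) → WithTop ℝ)
    (hL : ∀ (x y : Fin n → ℤ) (μ : ℕ),
      f ((x - (μ : ℤ) • 1) ⊔ y) + f (x ⊓ (y + (μ : ℤ) • 1)) ≤ f x + f y) :
    GloballyDMC f := by
  intro x y _
  rw [DMCPair, avgUp_eq, avgDown_eq]
  exact lnatConvex_globallyDMC_general (fun x y => by simpa using hL x y 0)
    (fun x y => by simpa using hL x y 1) (Set.finite_range _).bddAbove
end

section
/- Let f : ℤⁿ → ℝ ∪ {+∞} be a locally discrete midpoint convex function. Then discrete midpoint convexity f(x) + f(y) ≥ f(⌈(x+y)/2⌉) + f(⌊(x+y)/2⌋) holds for all x, y ∈ ℤⁿ for which ‖x − y‖∞ is even. -/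
/-!
Split an integer `d` with `|d| ≤ m` into the `m` steps `⌊(d + k) / m⌋`, `0 ≤ k < m`, which lie in
`{-1, 0, 1}` and sum to `d` by Hermite's identity. Applied componentwise to `d = y - x` with
`m = ‖d‖∞`, this gives an ascending chain of unit steps from `x` to `y`, and a discrete midpoint
convex set containing `x` and `y` contains all partial sums of the chain.

If `‖d‖∞ = 2 * m`, both halves `⌊d / 2⌋` and `⌈d / 2⌉` have norm `m`, and the partial sums of their
steps span an `m × m` grid with corners `x`, `⌊(x + y) / 2⌋`, `⌈(x + y) / 2⌉` and `y`. Since the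
corners are in the effective domain, so is the whole grid. Each of its cells is an instance of
discrete midpoint convexity at distance two, and adding up all cells gives the claim.
-/

/-- The `k`-th (`0 ≤ k < m`) of the `m` steps, in increasing order, into which the displacement `d`
is split as evenly as possible. If `linf d ≤ m`, its entries are `-1`, `0` or `1`; for `m = 2` the
two steps are the halves of `d`, rounded down and up. -/
def balancedStep {n : ℕ} (m : ℕ) (d : Fin n → ℤ) (k : ℕ) : Fin n → ℤ :=
  fun i => (d i + k) / m

/-- The first of the balanced steps from `x` to `avgUp x (x + d)`, where `linf d = m`; it does not
depend on `x`. -/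
def firstStepToAvgUp {n : ℕ} (m : ℕ) (d : Fin n → ℤ) : Fin n → ℤ :=
  balancedStep ((m + 1) / 2) (balancedStep 2 d 1) 0

theorem sum_range_add_ediv (d : ℤ) {m : ℕ} (hm : 0 < m) :
    ∑ k ∈ Finset.range m, (d + k) / (m : ℤ) = d := by
  have hm' : (m : ℤ) ≠ 0 := by omega
  have shift (c : ℤ) : ∑ k ∈ Finset.range m, (c + 1 + k) / (m : ℤ) =
      ∑ k ∈ Finset.range m, (c + k) / (m : ℤ) + 1 := by
    have h := (Finset.sum_range_succ' (fun k : ℕ => (c + k) / (m : ℤ)) m).symm.trans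
      (Finset.sum_range_succ _ m)
    rw [Int.add_ediv_of_dvd_right (dvd_refl (m : ℤ)), Int.ediv_self hm'] at h
    simp only [Nat.cast_add, Nat.cast_one, Nat.cast_zero, add_zero] at h
    simp only [add_assoc, add_comm (1 : ℤ)]
    omega
  induction d with
  | zero =>
    refine Finset.sum_eq_zero fun k hk => ?_
    rw [Finset.mem_range] at hk
    exact Int.ediv_eq_zero_of_lt (by omega) (by omega)
  | succ c ih => rw [shift, ih]
  | pred c ih =>
    have := shift (-c - 1)
    rw [sub_add_cancel, ih] at this
    omega

theorem add_ediv_eq_ite {d k m : ℤ} (hlo : -m ≤ d) (hhi : d ≤ m) (hk₀ : 0 ≤ k) (hk : k < m) :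
    (d + k) / m = if m ≤ d + k then 1 else if d + k < 0 then -1 else 0 := by
  have hm : 0 < m := hk₀.trans_lt hk
  split_ifs <;> rw [Int.ediv_eq_iff_of_pos hm] <;> constructor <;> linarith

section Linf

variable {n : ℕ} {d : Fin n → ℤ} {m : ℕ}

theorem natAbs_le_linf (d : Fin n → ℤ) (i : Fin n) : (d i).natAbs ≤ linf d :=
  Finset.le_sup (f := fun i => (d i).natAbs) (Finset.mem_univ i)

theorem linf_eq_of_forall_le (h : ∀ i, (d i).natAbs ≤ m) {i₀ : Fin n} (hi₀ : m ≤ (d i₀).natAbs) :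
    linf d = m :=
  le_antisymm (Finset.sup_le fun i _ => h i) (hi₀.trans (natAbs_le_linf d i₀))

theorem exists_natAbs_eq_linf_s8 (h : 0 < linf d) : ∃ i, (d i).natAbs = linf d := by
  obtain ⟨j, -, -⟩ := Finset.lt_sup_iff.1 h
  obtain ⟨i, -, hi⟩ := Finset.exists_mem_eq_sup _ ⟨j, Finset.mem_univ j⟩ fun i => (d i).natAbs
  exact ⟨i, hi.symm⟩

theorem linf_neg (d : Fin n → ℤ) : linf (-d) = linf d := by
  simp only [linf, Pi.neg_apply, Int.natAbs_neg]

theorem eq_zero_of_linf_eq_zero (h : linf d = 0) : d = 0 := by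
  funext i
  have := natAbs_le_linf d i
  rw [Pi.zero_apply]
  omega

end Linf

section BalancedStep

variable {n m k : ℕ} {d : Fin n → ℤ}

theorem sum_range_balancedStep (hm : 0 < m) (d : Fin n → ℤ) :
    ∑ k ∈ Finset.range m, balancedStep m d k = d := by
  funext i
  rw [Finset.sum_apply]
  exact sum_range_add_ediv (d i) hm

theorem balancedStep_apply_eq_ite (hd : linf d ≤ m) (hk : k < m) (i : Fin n) :
    balancedStep m d k i = if m ≤ d i + k then 1 else if d i + k < 0 then -1 else 0 := by
  have := natAbs_le_linf d i
  exact add_ediv_eq_ite (by omega) (by omega) (by omega) (by omega)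

theorem balancedStep_one (d : Fin n → ℤ) : balancedStep 1 d 0 = d := by
  funext i
  simp [balancedStep]

theorem balancedStep_two_add (d : Fin n → ℤ) :
    balancedStep 2 d 0 + balancedStep 2 d 1 = d := by
  rw [← Finset.sum_range_one (balancedStep 2 d), ← Finset.sum_range_succ]
  exact sum_range_balancedStep two_pos d

theorem balancedStep_neg_zero (d : Fin n → ℤ) (m : ℕ) :
    balancedStep (m + 1) (-d) 0 = -balancedStep (m + 1) d m := by
  funext i
  have hm : (0 : ℤ) < (m + 1 : ℕ) := by omega
  have h := (Int.ediv_eq_iff_of_pos hm).1 (rfl : (d i + m) / ((m + 1 : ℕ) : ℤ) = _)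
  simp only [balancedStep, Pi.neg_apply]
  rw [Int.ediv_eq_iff_of_pos hm]
  push_cast at h ⊢
  constructor <;> linarith

theorem balancedStep_sub_last (hd : linf d ≤ m + 1) (hk : k < m) :
    balancedStep m (d - balancedStep (m + 1) d m) k = balancedStep (m + 1) d k := by
  funext i
  have hdi := natAbs_le_linf d i
  have hlast := balancedStep_apply_eq_ite hd m.lt_succ_self i
  rw [balancedStep_apply_eq_ite hd (by omega), balancedStep, Pi.sub_apply,
    add_ediv_eq_ite (by grind) (by grind) (by omega) (by omega)]
  grind

theorem linf_sub_balancedStep (hd : linf d = m + 1) (hk : k ≤ m) :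
    linf (d - balancedStep (m + 1) d k) = m := by
  have hstep := balancedStep_apply_eq_ite hd.le (Nat.lt_succ_of_le hk)
  obtain ⟨i₀, hi₀⟩ := exists_natAbs_eq_linf_s8 (d := d) (by omega)
  refine linf_eq_of_forall_le (i₀ := i₀) (fun i => ?_) ?_
  · have := natAbs_le_linf d i
    grind [Pi.sub_apply]
  · grind [Pi.sub_apply]

theorem linf_balancedStep_two (hd : linf d = 2 * m) (hk : k < 2) :
    linf (balancedStep 2 d k) = m := by
  have hle : linf (balancedStep 2 d k) ≤ m := Finset.sup_le fun i _ => by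
    have := natAbs_le_linf d i
    simp only [balancedStep]
    omega
  have hge : linf d ≤ 2 * linf (balancedStep 2 d k) + 1 := Finset.sup_le fun i _ => by
    have := natAbs_le_linf (balancedStep 2 d k) i
    simp only [balancedStep] at this
    omega
  omega

theorem linf_balancedStep_two_one_of_apply_eq (hd : linf d = m) {i₀ : Fin n} (hi₀ : d i₀ = m) :
    linf (balancedStep 2 d 1) = (m + 1) / 2 := by
  refine linf_eq_of_forall_le (i₀ := i₀) (fun i => ?_) ?_
  · have := natAbs_le_linf d i
    simp only [balancedStep]
    omega
  · simp only [balancedStep]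
    omega

theorem firstStepToAvgUp_apply_eq_ite (hm : 0 < m) (hd : linf d ≤ m) (i : Fin n) :
    firstStepToAvgUp m d i =
      if m ≤ d i + (m + 1) % 2 then 1 else if d i < -1 then -1 else 0 := by
  have := natAbs_le_linf d i
  simp only [firstStepToAvgUp, balancedStep]
  rw [add_ediv_eq_ite] <;> grind

theorem linf_sub_firstStepToAvgUp (hm : 0 < m) (hd : linf d = m + 1) {i₀ : Fin n}
    (hi₀ : d i₀ = m + 1) :
    linf (d - firstStepToAvgUp (m + 1) d) = m := by
  have hu := firstStepToAvgUp_apply_eq_ite (by omega) hd.le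
  refine linf_eq_of_forall_le (i₀ := i₀) (fun i => ?_) ?_
  · have := natAbs_le_linf d i
    grind [Pi.sub_apply]
  · grind [Pi.sub_apply]

theorem balancedStep_sub_firstStepToAvgUp (hm : 1 < m) (hd : linf d ≤ m + 1) :
    balancedStep m (d - firstStepToAvgUp (m + 1) d) (m - 1) =
      balancedStep (m + 1) d m := by
  have hu := firstStepToAvgUp_apply_eq_ite (by omega) hd
  funext i
  have := natAbs_le_linf d i
  rw [balancedStep_apply_eq_ite hd (by omega), balancedStep, Pi.sub_apply, hu,
    add_ediv_eq_ite] <;> grind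

end BalancedStep

section Midpoints

variable {n : ℕ} (x d : Fin n → ℤ)

theorem avgDown_add_right_s8 : avgDown x (x + d) = x + balancedStep 2 d 0 := by
  funext i
  simp only [avgDown, balancedStep, Pi.add_apply]
  rw [← Int.cast_add]
  refine (Rat.floor_intCast_div_natCast _ 2).trans ?_
  omega

theorem avgUp_add_right_s8 : avgUp x (x + d) = x + balancedStep 2 d 1 := by
  funext i
  simp only [avgUp, balancedStep, Pi.add_apply]
  rw [← Int.cast_add]
  refine (Rat.ceil_intCast_div_natCast _ 2).trans ?_
  omega

theorem dmcPair_self (f : (Fin n → ℤ) → WithTop ℝ) : DMCPair f x x := by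
  have hup : avgUp x x = x := by
    funext i
    simp [avgUp]
  have hdown : avgDown x x = x := by
    funext i
    simp [avgDown]
  rw [DMCPair, hup, hdown]

end Midpoints

/-- `S` contains, with any two points `x` and `x + d` at distance `m`, also the first of the `m`
balanced steps from `x` towards `x + d`. This is the induction hypothesis on the distance in the
proof that discrete midpoint convex sets are closed under balanced steps. -/
def FirstStepMem {n : ℕ} (S : Set (Fin n → ℤ)) (m : ℕ) : Prop :=
  ∀ ⦃x d⦄, x ∈ S → x + d ∈ S → linf d = m → x + balancedStep m d 0 ∈ S

theorem FirstStepMem.sub_last_mem {n : ℕ} {S : Set (Fin n → ℤ)} {m : ℕ}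
    (h : FirstStepMem S (m + 1)) {x d : Fin n → ℤ} (hx : x ∈ S) (hxd : x + d ∈ S)
    (hd : linf d = m + 1) :
    x + d - balancedStep (m + 1) d m ∈ S := by
  rw [sub_eq_add_neg, ← balancedStep_neg_zero]
  exact h hxd (by rwa [add_neg_cancel_right]) (by rwa [linf_neg])

namespace DMCSet

variable {n : ℕ} {S : Set (Fin n → ℤ)}

theorem add_balancedStep_two_mem (hS : DMCSet S) {x d : Fin n → ℤ} (hx : x ∈ S) (hxd : x + d ∈ S)
    (hd : 2 ≤ linf d) : x + balancedStep 2 d 1 ∈ S ∧ x + balancedStep 2 d 0 ∈ S := by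
  rw [← avgUp_add_right_s8, ← avgDown_add_right_s8]
  exact hS hx hxd (by rwa [sub_add_cancel_left, linf_neg])

-- The first step `u` towards `avgUp x (x + d)` shortens the displacement to `d - u` and leaves
-- its last step unchanged, so the claim for `d` follows from the one for `d - u`.
theorem sub_last_mem_of_apply_eq (hS : DMCSet S) {m : ℕ} (ih : ∀ k < m + 1, FirstStepMem S k)
    {x d : Fin n → ℤ} (hx : x ∈ S) (hxd : x + d ∈ S) (hd : linf d = m + 1) {i₀ : Fin n}
    (hi₀ : d i₀ = m + 1) : x + d - balancedStep (m + 1) d m ∈ S := by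
  rcases m with _ | _ | m
  · simpa [balancedStep_one] using hx
  · have hhalves := balancedStep_two_add d
    rw [← eq_sub_iff_add_eq] at hhalves
    rw [add_sub_assoc, ← hhalves]
    exact (hS.add_balancedStep_two_mem hx hxd hd.ge).2
  · obtain ⟨hup, -⟩ := hS.add_balancedStep_two_mem hx hxd (by omega)
    have hxu := ih _ (by omega) hx hup (linf_balancedStep_two_one_of_apply_eq hd hi₀)
    have hlast := balancedStep_sub_firstStepToAvgUp (by omega) hd.le
    have hdu := linf_sub_firstStepToAvgUp (by omega) hd hi₀
    set u := firstStepToAvgUp (m + 3) d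
    have hy : x + u + (d - u) = x + d := by abel
    rw [← hlast, ← hy]
    exact (ih (m + 2) (by omega)).sub_last_mem hxu (by rwa [hy]) hdu

theorem firstStepMem (hS : DMCSet S) (m : ℕ) : FirstStepMem S m := by
  induction m using Nat.strong_induction_on with
  | _ m ih =>
  intro x d hx hxd hd
  rcases m with _ | m
  · have hzero : balancedStep 0 d 0 = 0 := funext fun i => Int.ediv_zero _
    rwa [hzero, add_zero]
  obtain ⟨i₀, hi₀⟩ := exists_natAbs_eq_linf_s8 (d := d) (by omega)
  rcases le_total 0 (d i₀) with hpos | hneg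
  · rcases m.eq_zero_or_pos with rfl | hm
    · rwa [balancedStep_one]
    have hlast := hS.sub_last_mem_of_apply_eq ih hx hxd hd (i₀ := i₀) (by omega)
    rw [← balancedStep_sub_last hd.le hm]
    exact ih m (by omega) hx (by rwa [← add_sub_assoc]) (linf_sub_balancedStep hd le_rfl)
  · have hlast := hS.sub_last_mem_of_apply_eq ih hxd (d := -d) (i₀ := i₀)
      (by rwa [add_neg_cancel_right]) (by rwa [linf_neg]) (by rw [Pi.neg_apply]; omega)
    rwa [add_neg_cancel_right, sub_eq_add_neg, ← balancedStep_neg_zero, neg_neg] at hlast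

theorem add_sum_range_mem (hS : DMCSet S) {m : ℕ} {x d : Fin n → ℤ} (hx : x ∈ S)
    (hxd : x + d ∈ S) (hd : linf d = m) {a : ℕ} (ha : a ≤ m) :
    x + ∑ k ∈ Finset.range a, balancedStep m d k ∈ S := by
  induction m generalizing d a with
  | zero => simpa [Nat.le_zero.1 ha] using hx
  | succ m ih =>
    rcases ha.eq_or_lt with rfl | ha
    · rwa [sum_range_balancedStep m.succ_pos]
    · have hsum : ∑ k ∈ Finset.range a, balancedStep (m + 1) d k =
          ∑ k ∈ Finset.range a, balancedStep m (d - balancedStep (m + 1) d m) k :=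
        Finset.sum_congr rfl fun k hk =>
          (balancedStep_sub_last hd.le (by rw [Finset.mem_range] at hk; omega)).symm
      rw [hsum]
      refine ih ?_ (linf_sub_balancedStep hd le_rfl) (by omega)
      rw [← add_sub_assoc]
      exact (hS.firstStepMem _).sub_last_mem hx hxd hd

end DMCSet

section Supermodular

variable {α : Type*} [AddCommMonoid α] [PartialOrder α] [IsOrderedCancelAddMonoid α]

theorem add_le_add_of_forall_add_le_add {N : ℕ} (p q : ℕ → WithTop α)
    (hp : ∀ b ≤ N, p b ≠ ⊤) (hq : ∀ b ≤ N, q b ≠ ⊤)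
    (h : ∀ b < N, q b + p (b + 1) ≤ p b + q (b + 1)) : q 0 + p N ≤ p 0 + q N := by
  induction N with
  | zero => exact (add_comm _ _).le
  | succ N ih =>
    have ihN := ih (fun b hb => hp b (by omega)) (fun b hb => hq b (by omega))
      fun b hb => h b (by omega)
    have hfin : p N + q N ≠ ⊤ := WithTop.add_ne_top.2 ⟨hp N N.le_succ, hq N N.le_succ⟩
    refine (WithTop.add_le_add_iff_right hfin).1 ?_
    calc q 0 + p (N + 1) + (p N + q N) = (q 0 + p N) + (q N + p (N + 1)) := by abel
      _ ≤ (p 0 + q N) + (p N + q (N + 1)) := add_le_add ihN (h N N.lt_succ_self)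
      _ = p 0 + q (N + 1) + (p N + q N) := by abel

theorem add_le_add_of_forall_cell {M N : ℕ} (g : ℕ → ℕ → WithTop α)
    (hg : ∀ a ≤ M, ∀ b ≤ N, g a b ≠ ⊤)
    (h : ∀ a < M, ∀ b < N, g (a + 1) b + g a (b + 1) ≤ g a b + g (a + 1) (b + 1)) :
    g M 0 + g 0 N ≤ g 0 0 + g M N := by
  rw [add_comm (g M 0)]
  refine add_le_add_of_forall_add_le_add (fun a => g a 0) (fun a => g a N)
    (fun a ha => hg a ha 0 N.zero_le) (fun a ha => hg a ha N le_rfl) fun a ha => ?_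
  rw [add_comm]
  exact add_le_add_of_forall_add_le_add (g a) (g (a + 1)) (hg a ha.le) (hg (a + 1) ha) (h a ha)

end Supermodular

theorem ediv_le_ediv_and_le_add_one {a b m : ℤ} (hm : 0 < m) (hab : a ≤ b) (hba : b ≤ a + m) :
    a / m ≤ b / m ∧ b / m ≤ a / m + 1 := by
  refine ⟨Int.ediv_le_ediv hm hab, (Int.ediv_le_ediv hm hba).trans_eq ?_⟩
  rw [Int.add_ediv_of_dvd_right dvd_rfl, Int.ediv_self hm.ne']

theorem linf_balancedStep_add_balancedStep {n : ℕ} {d : Fin n → ℤ} {m j k : ℕ}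
    (hd : linf d = 2 * m) (hj : j < m) (hk : k < m) :
    linf (balancedStep m (balancedStep 2 d 0) j + balancedStep m (balancedStep 2 d 1) k) = 2 := by
  have hdown := balancedStep_apply_eq_ite (linf_balancedStep_two hd two_pos).le hj
  have hup := balancedStep_apply_eq_ite (linf_balancedStep_two hd one_lt_two).le hk
  obtain ⟨i₀, hi₀⟩ := exists_natAbs_eq_linf_s8 (d := d) (by omega)
  refine linf_eq_of_forall_le (i₀ := i₀) (fun i => ?_) ?_
  · grind [Pi.add_apply]
  · rw [Pi.add_apply, hdown, hup]
    simp only [balancedStep]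
    split_ifs <;> omega

namespace LocallyDMC

variable {n : ℕ} {f : (Fin n → ℤ) → WithTop ℝ}

theorem add_le_add_of_linf_eq_two (h : LocallyDMC f) {u v : Fin n → ℤ} (huv : linf (u + v) = 2)
    (hle : ∀ i, u i ≤ v i ∧ v i ≤ u i + 1) (z : Fin n → ℤ) :
    f (z + u) + f (z + v) ≤ f z + f (z + u + v) := by
  have hdown : balancedStep 2 (u + v) 0 = u := by
    funext i
    have := hle i
    simp only [balancedStep, Pi.add_apply]
    omega
  have hup : balancedStep 2 (u + v) 1 = v := by
    funext i
    have := hle i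
    simp only [balancedStep, Pi.add_apply]
    omega
  have hpair := h.2 z (z + (u + v)) (by rwa [sub_add_cancel_left, linf_neg])
  rwa [DMCPair, avgUp_add_right_s8, avgDown_add_right_s8, hdown, hup, add_comm (f _),
    ← add_assoc z] at hpair

theorem balancedStep_cell_le (h : LocallyDMC f) {d : Fin n → ℤ} {m j k : ℕ}
    (hd : linf d = 2 * m) (hj : j < m) (hk : k < m) (z : Fin n → ℤ) :
    f (z + balancedStep m (balancedStep 2 d 0) j) + f (z + balancedStep m (balancedStep 2 d 1) k) ≤
      f z + f (z + balancedStep m (balancedStep 2 d 0) j +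
        balancedStep m (balancedStep 2 d 1) k) := by
  have hlinf := linf_balancedStep_add_balancedStep hd hj hk
  have hhalves (i : Fin n) : balancedStep 2 d 0 i ≤ balancedStep 2 d 1 i ∧
      balancedStep 2 d 1 i ≤ balancedStep 2 d 0 i + 1 := by
    simp only [balancedStep]
    omega
  rcases le_or_gt j k with hjk | hkj
  · refine h.add_le_add_of_linf_eq_two hlinf (fun i => ?_) z
    have := hhalves i
    exact ediv_le_ediv_and_le_add_one (by omega) (by omega) (by omega)
  · rw [add_comm (f (z + _)), add_right_comm z]
    refine h.add_le_add_of_linf_eq_two (by rwa [add_comm]) (fun i => ?_) z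
    have := hhalves i
    exact ediv_le_ediv_and_le_add_one (by omega) (by omega) (by omega)

end LocallyDMC

theorem DMCSet.add_sum_range_add_sum_range_mem {n : ℕ} {S : Set (Fin n → ℤ)} (hS : DMCSet S)
    {x d : Fin n → ℤ} {m a b : ℕ} (hx : x ∈ S) (hxd : x + d ∈ S) (hm : 0 < m)
    (hd : linf d = 2 * m) (ha : a ≤ m) (hb : b ≤ m) :
    x + ∑ j ∈ Finset.range a, balancedStep m (balancedStep 2 d 0) j +
      ∑ k ∈ Finset.range b, balancedStep m (balancedStep 2 d 1) k ∈ S := by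
  obtain ⟨hup, hdown⟩ := hS.add_balancedStep_two_mem hx hxd (by omega)
  have hlower := hS.add_sum_range_mem hx hdown (linf_balancedStep_two hd two_pos) ha
  have hupper := hS.add_sum_range_mem hup
    (by rwa [add_assoc, add_comm (balancedStep 2 d 1), balancedStep_two_add])
    (linf_balancedStep_two hd two_pos) ha
  rw [add_right_comm] at hupper
  exact hS.add_sum_range_mem hlower hupper (linf_balancedStep_two hd one_lt_two) hb

theorem LocallyDMC.dmcPair_add_right {n : ℕ} {f : (Fin n → ℤ) → WithTop ℝ} (h : LocallyDMC f)
    {x d : Fin n → ℤ} {m : ℕ} (hm : 0 < m) (hd : linf d = 2 * m) (hx : x ∈ effDom f)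
    (hxd : x + d ∈ effDom f) : DMCPair f x (x + d) := by
  have hgrid := add_le_add_of_forall_cell (M := m) (N := m)
    (fun a b => f (x + ∑ j ∈ Finset.range a, balancedStep m (balancedStep 2 d 0) j +
      ∑ k ∈ Finset.range b, balancedStep m (balancedStep 2 d 1) k))
    (fun a ha b hb => h.1.add_sum_range_add_sum_range_mem hx hxd hm hd ha hb)
    fun a ha b hb => by
      have hcell := h.balancedStep_cell_le hd ha hb
        (x + ∑ j ∈ Finset.range a, balancedStep m (balancedStep 2 d 0) j +
          ∑ k ∈ Finset.range b, balancedStep m (balancedStep 2 d 1) k)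
      simp only [Finset.sum_range_succ]
      convert hcell using 3 <;> abel
  simp only [Finset.sum_range_zero, add_zero, sum_range_balancedStep hm] at hgrid
  rwa [add_assoc, balancedStep_two_add, ← avgDown_add_right_s8, ← avgUp_add_right_s8,
    add_comm (f _)] at hgrid

/-- For a locally discrete midpoint convex function, discrete midpoint
convexity holds for all pairs whose ℓ∞-distance is even. -/
theorem locallyDMC_dmc_of_even {n : ℕ} (f : (Fin n → ℤ) → WithTop ℝ)
    (h : LocallyDMC f) (x y : Fin n → ℤ) (hxy : Even (linf (x - y))) :
    DMCPair f x y := by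
  by_cases hx : f x = ⊤
  · simp [DMCPair, hx]
  by_cases hy : f y = ⊤
  · simp [DMCPair, hy]
  obtain ⟨m, hm⟩ := hxy.two_dvd
  obtain ⟨d, rfl⟩ : ∃ d, y = x + d := ⟨y - x, (add_sub_cancel x y).symm⟩
  rw [sub_add_cancel_left, linf_neg] at hm
  rcases m.eq_zero_or_pos with rfl | hm₀
  · rw [eq_zero_of_linf_eq_zero hm, add_zero]
    exact dmcPair_self x f
  · exact h.dmcPair_add_right hm₀ hm hx hy
end
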